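/- Let G be a finite nilpotent group whose order is divisible by at least two distinct primes (so G is not a p-group for any prime p). Then γ(G) ≤ 2. -/

import Mathlib

/-- `D` is a dominating set of the intersection graph `Γ(G)` of the group `G`:
every member of `D` is a proper non-trivial subgroup of `G`, and every proper
non-trivial subgroup of `G` either belongs to `D` or intersects some member of
`D` non-trivially. -/
def IsDomSet {G : Type*} [Group G] (D : Set (Subgroup G)) : Prop :=
  (∀ H ∈ D, H ≠ ⊥ ∧ H ≠ ⊤) ∧
    ∀ K : Subgroup G, K ≠ ⊥ → K ≠ ⊤ →
      K ∈ D ∨ ∃ W ∈ D, W ≠ K ∧ K ⊓ W ≠ ⊥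

/-- The domination number `γ(G)`: the smallest cardinality of a dominating set
of the intersection graph `Γ(G)`. -/
noncomputable def domNumber (G : Type*) [Group G] : ℕ :=
  sInf {n : ℕ | ∃ D : Set (Subgroup G), IsDomSet D ∧ D.ncard = n}

/-!
If `N` is normal and `K ⊓ N = ⊥`, then `K` embeds in `G ⧸ N`, so `|K|` divides the index of `N`.
Hence a non-trivial subgroup cannot avoid two normal subgroups of coprime indices, and two such
subgroups, if proper, dominate the intersection graph. In a finite nilpotent group of order
divisible by `p`, a maximal subgroup containing a complement of a Sylow `p`-subgroup is normal of
`p`-power index; applying this to two primes gives the dominating pair.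
-/

section Domination

variable {G : Type*} [Group G] {D : Set (Subgroup G)}

theorem isDomSet_of_forall_exists_inf_ne_bot (hD : ∀ H ∈ D, H ≠ ⊥ ∧ H ≠ ⊤)
    (hmeet : ∀ K : Subgroup G, K ≠ ⊥ → ∃ W ∈ D, K ⊓ W ≠ ⊥) : IsDomSet D := by
  refine ⟨hD, fun K hK _ ↦ or_iff_not_imp_left.mpr fun hKD ↦ ?_⟩
  obtain ⟨W, hWD, hKW⟩ := hmeet K hK
  exact ⟨W, hWD, ne_of_mem_of_not_mem hWD hKD, hKW⟩

theorem IsDomSet.domNumber_le_ncard (hD : IsDomSet D) : domNumber G ≤ D.ncard :=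
  Nat.sInf_le ⟨D, hD, rfl⟩

end Domination

section CoprimeIndex

variable {G : Type*} [Group G] {K M N : Subgroup G}

theorem card_dvd_index_of_inf_eq_bot [N.Normal] (h : K ⊓ N = ⊥) : Nat.card K ∣ N.index :=
  calc Nat.card K = N.relIndex K := by
        rw [← Subgroup.inf_relIndex_left, h, Subgroup.relIndex_bot_left]
    _ ∣ N.index := Subgroup.relIndex_dvd_index_of_normal N K

theorem inf_ne_bot_or_inf_ne_bot_of_coprime_index [M.Normal] [N.Normal]
    (hMN : M.index.Coprime N.index) (hK : K ≠ ⊥) : K ⊓ M ≠ ⊥ ∨ K ⊓ N ≠ ⊥ := by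
  by_contra! ⟨hKM, hKN⟩
  exact hK <| Subgroup.card_eq_one.mp <| Nat.eq_one_of_dvd_coprimes hMN
    (card_dvd_index_of_inf_eq_bot hKM) (card_dvd_index_of_inf_eq_bot hKN)

theorem ne_bot_of_coprime_index (hMN : M.index.Coprime N.index) (hN : N ≠ ⊤) : M ≠ ⊥ := by
  rintro rfl
  rw [Subgroup.index_bot] at hMN
  exact hN <| Subgroup.index_eq_one.mp <| hMN.symm.eq_one_of_dvd N.index_dvd_card

theorem isDomSet_pair_of_coprime_index [M.Normal] [N.Normal]
    (hMN : M.index.Coprime N.index) (hM : M ≠ ⊤) (hN : N ≠ ⊤) : IsDomSet {M, N} := by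
  apply isDomSet_of_forall_exists_inf_ne_bot
  · rintro H (rfl | rfl)
    · exact ⟨ne_bot_of_coprime_index hMN hN, hM⟩
    · exact ⟨ne_bot_of_coprime_index hMN.symm hM, hN⟩
  · intro K hK
    simpa using inf_ne_bot_or_inf_ne_bot_of_coprime_index hMN hK

theorem domNumber_le_two_of_coprime_index [M.Normal] [N.Normal]
    (hMN : M.index.Coprime N.index) (hM : M ≠ ⊤) (hN : N ≠ ⊤) : domNumber G ≤ 2 :=
  calc domNumber G ≤ Set.ncard {M, N} :=
        (isDomSet_pair_of_coprime_index hMN hM hN).domNumber_le_ncard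
    _ ≤ 2 := by simpa using Set.ncard_insert_le M {N}

end CoprimeIndex

theorem exists_normal_ne_top_index_eq_prime_pow {G : Type*} [Group G] [Finite G]
    [Group.IsNilpotent G] {p : ℕ} (hp : p.Prime) (hpG : p ∣ Nat.card G) :
    ∃ M : Subgroup G, M.Normal ∧ M ≠ ⊤ ∧ ∃ n, M.index = p ^ n := by
  have := Fact.mk hp
  let P : Sylow p G := default
  obtain ⟨C, hPC⟩ := Subgroup.exists_right_complement'_of_coprime P.card_coprime_index
  have hC : C ≠ ⊤ := by
    rintro rfl
    exact P.ne_bot_of_dvd_card hpG (Subgroup.isComplement'_top_right.mp hPC)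
  obtain ⟨M, hM, hCM⟩ := (eq_top_or_exists_le_coatom C).resolve_left hC
  have hMP : M.index ∣ Nat.card P := hPC.index_eq_card ▸ Subgroup.index_dvd_of_le hCM
  obtain ⟨n, hn⟩ := IsPGroup.iff_card.mp P.isPGroup'
  obtain ⟨m, -, hm⟩ := (Nat.dvd_prime_pow hp).mp (hn ▸ hMP)
  have hMnormal : M.Normal :=
    Subgroup.NormalizerCondition.normal_of_coatom M Group.normalizerCondition_of_isNilpotent hM
  exact ⟨M, hMnormal, hM.ne_top, m, hm⟩

/-- A finite nilpotent group whose order is divisible by at least two distinct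
primes has domination number at most `2`. -/
theorem nilpotent_domNumber_le_two {G : Type*} [Group G] [Finite G]
    [Group.IsNilpotent G]
    (h : ∃ p q : ℕ, p.Prime ∧ q.Prime ∧ p ≠ q ∧ p ∣ Nat.card G ∧ q ∣ Nat.card G) :
    domNumber G ≤ 2 := by
  obtain ⟨p, q, hp, hq, hpq, hpG, hqG⟩ := h
  obtain ⟨M, _, hM, m, hMp⟩ := exists_normal_ne_top_index_eq_prime_pow hp hpG
  obtain ⟨N, _, hN, n, hNq⟩ := exists_normal_ne_top_index_eq_prime_pow hq hqG
  have hMN : M.index.Coprime N.index := by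
    rw [hMp, hNq]
    exact Nat.coprime_pow_primes m n hp hq hpq
  exact domNumber_le_two_of_coprime_index hMN hM hN
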